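/- Let R be a commutative Noetherian ring, M an R-module, and 0 → M → I^• a chain complex of R-modules. Then the following are equivalent: (1) 0 → M → I^• is a minimal injective resolution; (2) the dual complex Hom_R(I^•,E) → Hom_R(M,E) → 0 is a minimal flat resolution of Hom_R(M,E) for some injective cogenerator E; (3) Hom_R(I^•,E) → Hom_R(M,E) → 0 is a minimal flat resolution for every injective R-module E. -/

import Mathlib

universe u

variable (R : Type u) [CommRing R]

/-- A morphism `f : F → M` with `F` flat is a flat precover if every morphism from a
flat module to `M` factors through `f`. -/
def IsFlatPrecover {F M : Type u} [AddCommGroup F] [AddCommGroup M] [Module R F]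
    [Module R M] (f : F →ₗ[R] M) : Prop :=
  Module.Flat R F ∧
    ∀ (F' : Type u) [AddCommGroup F'] [Module R F'], Module.Flat R F' →
      ∀ g : F' →ₗ[R] M, ∃ h : F' →ₗ[R] F, f ∘ₗ h = g

/-- A flat precover `f : F → M` is a flat cover if every `h : F → F` with `f ∘ h = f`
is an automorphism. -/
def IsFlatCover {F M : Type u} [AddCommGroup F] [AddCommGroup M] [Module R F]
    [Module R M] (f : F →ₗ[R] M) : Prop :=
  IsFlatPrecover R f ∧ ∀ h : F →ₗ[R] F, f ∘ₗ h = f → Function.Bijective h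

/-- A morphism `i : M → E` is an injective envelope if `E` is injective, `i` is
injective, and the image of `i` is an essential submodule of `E`. -/
def IsInjectiveEnvelope {M E : Type u} [AddCommGroup M] [AddCommGroup E] [Module R M]
    [Module R E] (i : M →ₗ[R] E) : Prop :=
  Module.Injective R E ∧ Function.Injective i ∧
    ∀ N : Submodule R E, N ≠ ⊥ → N ⊓ LinearMap.range i ≠ ⊥

/-- An injective cogenerator is an injective module `E` such that `Hom(N, E) ≠ 0`
for every nonzero module `N`. -/
def IsInjectiveCogenerator (E : Type u) [AddCommGroup E] [Module R E] : Prop :=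
  Module.Injective R E ∧
    ∀ (N : Type u) [AddCommGroup N] [Module R N], (∃ x : N, x ≠ 0) →
      ∃ g : N →ₗ[R] E, g ≠ 0

/-- `0 → M → I⁰ → I¹ → ⋯` is a minimal injective resolution if it is an injective
resolution in which each map from the image of a differential into the next term is an
injective envelope. -/
def IsMinimalInjectiveResolution (M : Type u) [AddCommGroup M] [Module R M]
    (I : ℕ → Type u) [∀ n, AddCommGroup (I n)] [∀ n, Module R (I n)]
    (ι : M →ₗ[R] I 0) (d : ∀ n, I n →ₗ[R] I (n + 1)) : Prop :=
  (∀ n, Module.Injective R (I n)) ∧ Function.Injective ι ∧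
    LinearMap.range ι = LinearMap.ker (d 0) ∧
    (∀ n, LinearMap.range (d n) = LinearMap.ker (d (n + 1))) ∧
    IsInjectiveEnvelope R (LinearMap.range ι).subtype ∧
    ∀ n, IsInjectiveEnvelope R (LinearMap.range (d n)).subtype

/-- `⋯ → F₁ → F₀ → M → 0` is a minimal flat resolution if it is a resolution such
that each induced map `Fᵢ → im dᵢ` is a flat cover. -/
def IsMinimalFlatResolution (M : Type u) [AddCommGroup M] [Module R M]
    (F : ℕ → Type u) [∀ n, AddCommGroup (F n)] [∀ n, Module R (F n)]
    (π : F 0 →ₗ[R] M) (d : ∀ n, F (n + 1) →ₗ[R] F n) : Prop :=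
  Function.Surjective π ∧
    LinearMap.range (d 0) = LinearMap.ker π ∧
    (∀ n, LinearMap.range (d (n + 1)) = LinearMap.ker (d n)) ∧
    IsFlatCover R π ∧
    ∀ n, IsFlatCover R (d n).rangeRestrict

/-!
An injective cogenerator detects exactness, and tensor evaluation
`Hom(A, E) ⊗ P ≅ Hom(Hom(P, A), E)` turns flatness of `Hom(A, E)` into injectivity of `A`, so the
point is to match essential submodules with flat covers. Let `f` be an endomorphism of `Hom(A, E)`
that preserves restrictions to a submodule `N` of `A`, that is, `f φ = φ` on `N` for all `φ`.

If `N` is essential in `A` then `f` is bijective. By tensor evaluation with `P = R / a`, `f` induces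
an endomorphism of `Hom(A[a], E)` for each ideal `a`, where `A[a]` is the `a`-torsion of `A`. Being
an automorphism there is an Oka property of `a`, so an ideal maximal among those where it fails is
a prime `p`. Then `f` induces an automorphism of `Hom(⋃ A[p + (s)], E)`, the union being over
`s ∉ p`, while essentiality of `N` makes `f` the identity on the functionals on `A[p]` vanishing on
that union; this is a contradiction. The ideal `a = 0` gives the claim.

Conversely, if a nonzero submodule `L` of `A` meets `N` trivially, then `N → A` extends along
`N → A / L` to a map `A / L → A`, and the composite `A → A / L → A` induces an `f` as above that is
not bijective when `E` is a cogenerator.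
-/

open Function LinearMap TensorProduct

universe v w

variable {R}

theorem le_ker_sub_iff_eqOn {A B : Type*} [AddCommGroup A] [Module R A] [AddCommGroup B]
    [Module R B] {K : Submodule R A} {f g : A →ₗ[R] B} : K ≤ ker (f - g) ↔ Set.EqOn f g K := by
  rw [← eqLocus_eq_ker_sub, le_eqLocus]

section Extension

variable {A B C : Type*} [AddCommGroup A] [Module R A] [AddCommGroup B] [Module R B]
  [AddCommGroup C] [Module R C] {E : Type v} [AddCommGroup E] [Module R E]
  [Small.{v} R] [Module.Injective R E]

theorem exists_comp_eq_of_ker_le_ker (f : A →ₗ[R] B) (g : A →ₗ[R] E) (h : ker f ≤ ker g) :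
    ∃ w : B →ₗ[R] E, w ∘ₗ f = g := by
  obtain ⟨w, hw⟩ := Module.Injective.extension_property R E _ _ ((ker f).liftQ f le_rfl)
    (ker_eq_bot.1 (Submodule.ker_liftQ_eq_bot _ _ _ le_rfl)) ((ker f).liftQ g h)
  exact ⟨w, LinearMap.ext fun x => LinearMap.congr_fun hw (Submodule.Quotient.mk x)⟩

theorem lcomp_surjective_of_injective {f : A →ₗ[R] B} (hf : Injective f) :
    Surjective (lcomp R E f) := fun g =>
  exists_comp_eq_of_ker_le_ker f g ((ker_eq_bot.2 hf).trans_le bot_le)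

theorem range_lcomp_eq_ker_lcomp {f : A →ₗ[R] B} {g : B →ₗ[R] C} (h : range f = ker g) :
    range (lcomp R E g) = ker (lcomp R E f) := by
  ext φ
  rw [mem_ker, lcomp_apply', ← range_le_ker_iff, h]
  refine ⟨?_, exists_comp_eq_of_ker_le_ker g φ⟩
  rintro ⟨ψ, rfl⟩
  exact ker_le_ker_comp g ψ

end Extension

namespace IsInjectiveCogenerator

variable {E : Type u} [AddCommGroup E] [Module R E]

theorem eq_zero_of_forall_apply_eq_zero (hE : IsInjectiveCogenerator R E) {A : Type u}
    [AddCommGroup A] [Module R A] {x : A} (h : ∀ φ : A →ₗ[R] E, φ x = 0) : x = 0 := by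
  by_contra hx
  have := hE.1
  obtain ⟨g, hg⟩ := hE.2 (R ∙ x) ⟨⟨x, Submodule.mem_span_singleton_self x⟩, by simpa using hx⟩
  obtain ⟨φ, rfl⟩ := lcomp_surjective_of_injective (R ∙ x).subtype_injective g
  refine hg (LinearMap.ext fun ⟨y, hy⟩ => ?_)
  obtain ⟨r, rfl⟩ := Submodule.mem_span_singleton.1 hy
  simp [h φ]

theorem injective_of_lcomp_surjective (hE : IsInjectiveCogenerator R E) {A : Type u} {B : Type*}
    [AddCommGroup A] [Module R A] [AddCommGroup B] [Module R B] {f : A →ₗ[R] B}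
    (h : Surjective (lcomp R E f)) : Injective f := by
  refine (injective_iff_map_eq_zero f).2 fun x hx => hE.eq_zero_of_forall_apply_eq_zero fun φ => ?_
  obtain ⟨ψ, rfl⟩ := h φ
  rw [lcomp_apply, hx, map_zero]

theorem range_eq_ker_of_lcomp (hE : IsInjectiveCogenerator R E) {B : Type u} {A C : Type*}
    [AddCommGroup A] [Module R A] [AddCommGroup B] [Module R B] [AddCommGroup C] [Module R C]
    {f : A →ₗ[R] B} {g : B →ₗ[R] C} (hgf : g ∘ₗ f = 0)
    (h : ker (lcomp R E f) ≤ range (lcomp R E g)) : range f = ker g := by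
  refine le_antisymm (range_le_ker_iff.2 hgf) fun x hx => ?_
  rw [← Submodule.Quotient.mk_eq_zero]
  refine hE.eq_zero_of_forall_apply_eq_zero fun φ => ?_
  obtain ⟨ψ, hψ⟩ := h (x := φ ∘ₗ (range f).mkQ) <| by
    rw [mem_ker, lcomp_apply', LinearMap.comp_assoc, range_mkQ_comp, comp_zero]
  calc φ (Submodule.Quotient.mk x) = ψ (g x) := (LinearMap.congr_fun hψ x).symm
    _ = 0 := by rw [mem_ker.1 hx, map_zero]

theorem surjective_of_lcomp_injective (hE : IsInjectiveCogenerator R E) {B : Type u} {A : Type*}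
    [AddCommGroup A] [Module R A] [AddCommGroup B] [Module R B] {f : A →ₗ[R] B}
    (h : Injective (lcomp R E f)) : Surjective f := by
  rw [← range_eq_top, hE.range_eq_ker_of_lcomp (zero_comp f : (0 : B →ₗ[R] B) ∘ₗ f = 0)
    ((ker_eq_bot.2 h).trans_le bot_le), ker_zero]

end IsInjectiveCogenerator

theorem exists_ne_zero_characterModule {A : Type*} [AddCommGroup A] [Module R A] {x : A}
    (hx : x ≠ 0) : ∃ g : A →ₗ[R] CharacterModule R, g ≠ 0 := by
  obtain ⟨c, hc⟩ := CharacterModule.exists_character_apply_ne_zero_of_ne_zero hx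
  let c' : CharacterModule (A ⊗[R] R) := CharacterModule.dual (TensorProduct.rid R A).toLinearMap c
  refine ⟨CharacterModule.homEquiv.symm c', fun h => hc ?_⟩
  calc c x = c (TensorProduct.rid R A (x ⊗ₜ 1)) := by rw [rid_tmul, one_smul]
    _ = 0 := DFunLike.congr_fun (LinearMap.congr_fun h x) 1

theorem isInjectiveCogenerator_characterModule : IsInjectiveCogenerator R (CharacterModule R) :=
  ⟨Module.Flat.iff_characterModule_injective.mp inferInstance, fun _ _ _ ⟨_, hx⟩ =>
    exists_ne_zero_characterModule hx⟩

section HomTensorEval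

variable {A P Q : Type*} [AddCommGroup A] [Module R A] [AddCommGroup P] [Module R P]
  [AddCommGroup Q] [Module R Q] {E : Type v} [AddCommGroup E] [Module R E]

variable (R A P E) in
/-- The tensor evaluation morphism `Hom(A, E) ⊗ P → Hom(Hom(P, A), E)`, sending `φ ⊗ p` to
`g ↦ φ (g p)`. It is an isomorphism when `P` is finitely presented and `E` is injective, and turns
questions about tensoring with `Hom(A, E)` into questions about `Hom(-, A)`. -/
def homTensorEval : (A →ₗ[R] E) ⊗[R] P →ₗ[R] ((P →ₗ[R] A) →ₗ[R] E) :=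
  TensorProduct.lift ((llcomp R (P →ₗ[R] A) A E).compl₂ applyₗ)

@[simp]
theorem homTensorEval_tmul_apply (φ : A →ₗ[R] E) (p : P) (g : P →ₗ[R] A) :
    homTensorEval R A P E (φ ⊗ₜ p) g = φ (g p) := rfl

theorem homTensorEval_comp_lTensor (f : P →ₗ[R] Q) :
    homTensorEval R A Q E ∘ₗ f.lTensor (A →ₗ[R] E) =
      lcomp R E (lcomp R A f) ∘ₗ homTensorEval R A P E :=
  TensorProduct.ext' fun _ _ => rfl

theorem homTensorEval_bijective_pi (n : ℕ) : Bijective (homTensorEval R A (Fin n → R) E) := by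
  let e : (A →ₗ[R] E) ⊗[R] (Fin n → R) ≃ₗ[R] ((Fin n → R) →ₗ[R] A) →ₗ[R] E :=
    piScalarRight R R (A →ₗ[R] E) (Fin n) ≪≫ₗ lsum R (fun _ : Fin n => A) R ≪≫ₗ
      (LinearEquiv.piRing R A (Fin n) R).symm.congrLeft E R
  have he : homTensorEval R A (Fin n → R) E = e := by
    ext φ i g
    simp [e]
  rw [he]
  exact e.bijective

variable [Small.{v} R] [Module.Injective R E]

variable (R A P E) in
theorem homTensorEval_surjective [Module.Finite R P] : Surjective (homTensorEval R A P E) := by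
  obtain ⟨n, π, hπ⟩ := Module.Finite.exists_fin' R P
  have h : Surjective (homTensorEval R A P E ∘ₗ π.lTensor _) := by
    rw [homTensorEval_comp_lTensor]
    exact (lcomp_surjective_of_injective (lcomp_injective_of_surjective π hπ)).comp
      (homTensorEval_bijective_pi n).2
  exact Surjective.of_comp (g := π.lTensor _) h

variable (R A P E) in
theorem homTensorEval_injective [Module.FinitePresentation R P] :
    Injective (homTensorEval R A P E) := by
  obtain ⟨n, π, hπ⟩ := Module.Finite.exists_fin' R P
  have := Module.Finite.iff_fg.2 (Module.FinitePresentation.fg_ker π hπ)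
  have hker : Exact (ker π).subtype π := exact_subtype_ker_map π
  have hdual : Exact (lcomp R E (lcomp R A (ker π).subtype)) (lcomp R E (lcomp R A π)) :=
    LinearMap.exact_iff.2 (range_lcomp_eq_ker_lcomp
      (LinearMap.exact_iff.1 (exact_lcomp_of_exact_of_surjective A hker hπ)).symm).symm
  exact injective_of_surjective_of_injective_of_right_exact _ _ _ _ _ _ _
    (homTensorEval_comp_lTensor (ker π).subtype).symm (homTensorEval_comp_lTensor π).symm
    (lTensor_exact _ hker hπ) hdual (homTensorEval_surjective R A (ker π) E)
    (homTensorEval_bijective_pi n).1 (lTensor_surjective _ hπ)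

theorem lTensor_injective_iff [Module.FinitePresentation R P] [Module.FinitePresentation R Q]
    (f : P →ₗ[R] Q) :
    Injective (f.lTensor (A →ₗ[R] E)) ↔ Injective (lcomp R E (lcomp R A f)) := by
  rw [← (homTensorEval_injective R A Q E).of_comp_iff, ← coe_comp, homTensorEval_comp_lTensor,
    coe_comp, Injective.of_comp_iff' _
      ⟨homTensorEval_injective R A P E, homTensorEval_surjective R A P E⟩]

end HomTensorEval

section FlatHom

variable [IsNoetherianRing R]

theorem flat_linearMap {A : Type w} [AddCommGroup A] [Module R A] [Small.{w} R]
    [Module.Injective R A] {E : Type v} [AddCommGroup E] [Module R E] [Small.{v} R]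
    [Module.Injective R E] : Module.Flat R (A →ₗ[R] E) :=
  Module.Flat.iff_lTensor_injective.2 fun a _ =>
    have := Module.finitePresentation_of_finite R a
    (lTensor_injective_iff _).2 <| lcomp_injective_of_surjective _ <|
      lcomp_surjective_of_injective a.subtype_injective

theorem IsInjectiveCogenerator.injective_of_flat_linearMap {A E : Type u} [AddCommGroup A]
    [Module R A] [AddCommGroup E] [Module R E] (hE : IsInjectiveCogenerator R E)
    [Module.Flat R (A →ₗ[R] E)] : Module.Injective R A :=
  Module.Baer.injective <| Module.Baer.iff_surjective.2 fun a =>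
    have := hE.1
    have := Module.finitePresentation_of_finite R a
    hE.surjective_of_lcomp_injective <| (lTensor_injective_iff a.subtype).1 <|
      Module.Flat.lTensor_preserves_injective_linearMap _ a.subtype_injective

end FlatHom

section IdealTorsion

open Submodule (torsionBySet)

variable {A : Type*} [AddCommGroup A] [Module R A]

theorem mem_torsionBySet_iff_le_torsionOf {a : Ideal R} {z : A} :
    z ∈ torsionBySet R A a ↔ a ≤ Ideal.torsionOf R A z := by
  simp only [Submodule.mem_torsionBySet_iff, Subtype.forall, SetLike.mem_coe, SetLike.le_def,
    Ideal.mem_torsionOf_iff]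

theorem torsionBySet_anti {a b : Ideal R} (h : a ≤ b) : torsionBySet R A b ≤ torsionBySet R A a :=
  Submodule.torsionBySet_le_torsionBySet_of_subset h

theorem mem_torsionBySet_sup_span_singleton {a : Ideal R} {x : R} {z : A} :
    z ∈ torsionBySet R A ↑(a ⊔ Ideal.span {x}) ↔ z ∈ torsionBySet R A a ∧ x • z = 0 := by
  simp only [mem_torsionBySet_iff_le_torsionOf, sup_le_iff, Ideal.span_singleton_le_iff_mem,
    Ideal.mem_torsionOf_iff]

theorem smul_mem_torsionBySet_colon {a : Ideal R} {z : A} (hz : z ∈ torsionBySet R A a) (x : R) :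
    x • z ∈ torsionBySet R A ↑(a.colon (Ideal.span {x} : Set R)) := by
  rw [mem_torsionBySet_iff_le_torsionOf] at hz ⊢
  intro r hr
  rw [Ideal.mem_torsionOf_iff, smul_smul]
  exact hz (Ideal.mem_colon_span_singleton.1 hr)

theorem mem_torsionBySet_iff_exists_apply_one {a : Ideal R} {z : A} :
    z ∈ torsionBySet R A a ↔ ∃ g : (R ⧸ a) →ₗ[R] A, g 1 = z := by
  rw [mem_torsionBySet_iff_le_torsionOf]
  refine ⟨fun h => ⟨a.liftQ (toSpanSingleton R A z) h, one_smul R z⟩, ?_⟩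
  rintro ⟨g, rfl⟩ r hr
  rw [Ideal.mem_torsionOf_iff, ← map_smul, Algebra.smul_def, mul_one,
    Ideal.Quotient.algebraMap_eq, Ideal.Quotient.eq_zero_iff_mem.2 hr, map_zero]

theorem exists_smul_eq_of_mem_torsionBySet_colon {A : Type v} [AddCommGroup A] [Module R A]
    [Small.{v} R] [Module.Injective R A] {a : Ideal R} {x : R} {z : A}
    (hz : z ∈ torsionBySet R A ↑(a.colon (Ideal.span {x} : Set R))) :
    ∃ w ∈ torsionBySet R A a, x • w = z := by
  have hker : ker (toSpanSingleton R (R ⧸ a) (x • 1)) ≤ ker (toSpanSingleton R A z) := by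
    refine le_trans (fun r hr => ?_) (mem_torsionBySet_iff_le_torsionOf.1 hz)
    rw [mem_ker, toSpanSingleton_apply, smul_smul, Algebra.smul_def, mul_one,
      Ideal.Quotient.algebraMap_eq, Ideal.Quotient.eq_zero_iff_mem] at hr
    exact Ideal.mem_colon_span_singleton.2 hr
  obtain ⟨g, hg⟩ := exists_comp_eq_of_ker_le_ker _ _ hker
  refine ⟨g 1, mem_torsionBySet_iff_exists_apply_one.2 ⟨g, rfl⟩, ?_⟩
  simpa using LinearMap.congr_fun hg 1

section HomDual

variable {E : Type v} [AddCommGroup E] [Module R E] [Small.{v} R] [Module.Injective R E]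

theorem tmul_one_eq_zero_iff {a : Ideal R} (ha : a.FG) {φ : A →ₗ[R] E} :
    φ ⊗ₜ[R] (1 : R ⧸ a) = 0 ↔ torsionBySet R A a ≤ ker φ := by
  have := Module.finitePresentation_of_surjective a.mkQ a.mkQ_surjective (by rwa [a.ker_mkQ])
  rw [← (homTensorEval_injective R A (R ⧸ a) E).eq_iff, map_zero, LinearMap.ext_iff]
  simp only [homTensorEval_tmul_apply, LinearMap.zero_apply, SetLike.le_def, mem_ker,
    mem_torsionBySet_iff_exists_apply_one, forall_exists_index, forall_apply_eq_imp_iff]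

theorem torsionBySet_le_ker_apply {B : Type*} [AddCommGroup B] [Module R B] {a : Ideal R}
    (ha : a.FG) (f : (A →ₗ[R] E) →ₗ[R] (B →ₗ[R] E)) {φ : A →ₗ[R] E}
    (h : torsionBySet R A a ≤ ker φ) : torsionBySet R B a ≤ ker (f φ) := by
  rw [← tmul_one_eq_zero_iff ha] at h ⊢
  rw [← rTensor_tmul, h, map_zero]

theorem torsionBySet_eqOn_apply {B : Type*} [AddCommGroup B] [Module R B] {a : Ideal R}
    (ha : a.FG) (f : (A →ₗ[R] E) →ₗ[R] (B →ₗ[R] E)) {φ ψ : A →ₗ[R] E}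
    (h : Set.EqOn φ ψ (torsionBySet R A a)) : Set.EqOn (f φ) (f ψ) (torsionBySet R B a) := by
  rw [← le_ker_sub_iff_eqOn] at h ⊢
  rw [← map_sub]
  exact torsionBySet_le_ker_apply ha f h

theorem exists_eqOn_smul (K : Submodule R A) (x : R) (φ : A →ₗ[R] E)
    (h : ∀ z ∈ K, x • z = 0 → φ z = 0) : ∃ ψ : A →ₗ[R] E, Set.EqOn φ (x • ψ) K := by
  obtain ⟨ψ, hψ⟩ := exists_comp_eq_of_ker_le_ker (x • K.subtype) (φ ∘ₗ K.subtype)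
    fun ⟨z, hz⟩ hxz => h z hz hxz
  refine ⟨ψ, fun z hz => ?_⟩
  simpa using (LinearMap.congr_fun hψ ⟨z, hz⟩).symm

end HomDual

end IdealTorsion

section Gluing

variable {A : Type*} [AddCommGroup A] [Module R A] {E : Type v} [AddCommGroup E] [Module R E]
  [Small.{v} R] [Module.Injective R E]

theorem exists_eqOn_of_directed {ι : Type*} {K : ι → Submodule R A} (hK : Directed (· ≤ ·) K)
    (φ : ι → A →ₗ[R] E)
    (h : ∀ i j, K i ≤ K j → Set.EqOn (φ i) (φ j) (K i)) :
    ∃ χ : A →ₗ[R] E, ∀ i, Set.EqOn χ (φ i) (K i) := by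
  let p : ι → A →ₗ.[R] E := fun i => ⟨K i, φ i ∘ₗ (K i).subtype⟩
  have hp {i j : ι} (hij : K i ≤ K j) : p i ≤ p j :=
    ⟨hij, fun y z hyz => (h i j hij y.2).trans (congrArg (φ j) hyz)⟩
  have hdir : DirectedOn (· ≤ ·) (Set.range p) := by
    rintro _ ⟨i, rfl⟩ _ ⟨j, rfl⟩
    obtain ⟨k, hik, hjk⟩ := hK i j
    exact ⟨p k, ⟨k, rfl⟩, hp hik, hp hjk⟩
  obtain ⟨χ, hχ⟩ := lcomp_surjective_of_injective
    (LinearPMap.sSup _ hdir).domain.subtype_injective (LinearPMap.sSup _ hdir).toFun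
  exact ⟨χ, fun i z hz => (LinearMap.congr_fun hχ _).trans
    (LinearPMap.sSup_apply hdir (Set.mem_range_self i) ⟨z, hz⟩)⟩

end Gluing

section InducesAutOn

variable {A : Type*} [AddCommGroup A] [Module R A] {E : Type v} [AddCommGroup E] [Module R E]

/-- The endomorphism `f` of `Hom(A, E)` induces an automorphism of its quotient by the functionals
that vanish on `K`; for `E` injective this quotient is `Hom(K, E)`. Injectivity and surjectivity of
the induced map are spelled out on representatives. -/
structure InducesAutOn (f : Module.End R (A →ₗ[R] E)) (K : Submodule R A) : Prop where
  le_ker_iff (φ : A →ₗ[R] E) : K ≤ ker (f φ) ↔ K ≤ ker φ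
  exists_eqOn (ψ : A →ₗ[R] E) : ∃ φ, Set.EqOn (f φ) ψ K

namespace InducesAutOn

variable {f : Module.End R (A →ₗ[R] E)} {K T : Submodule R A}

theorem eqOn_iff (h : InducesAutOn f K) {φ ψ : A →ₗ[R] E} :
    Set.EqOn (f φ) (f ψ) K ↔ Set.EqOn φ ψ K := by
  rw [← le_ker_sub_iff_eqOn, ← map_sub, h.le_ker_iff, le_ker_sub_iff_eqOn]

theorem bot : InducesAutOn f ⊥ :=
  ⟨fun _ => iff_of_true bot_le bot_le, fun _ => ⟨0, le_ker_sub_iff_eqOn.1 bot_le⟩⟩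

theorem bijective (h : InducesAutOn f ⊤) : Bijective f := by
  refine ⟨fun φ ψ hφψ => ?_, fun ψ => ?_⟩
  · exact LinearMap.ext fun z => h.eqOn_iff.1 (fun _ _ => by rw [hφψ]) (Set.mem_univ z)
  · obtain ⟨φ, hφ⟩ := h.exists_eqOn ψ
    exact ⟨φ, LinearMap.ext fun z => hφ (Set.mem_univ z)⟩

theorem of_le (hT : InducesAutOn f T) (hTK : T ≤ K)
    (hK : ∀ φ : A →ₗ[R] E, K ≤ ker φ → K ≤ ker (f φ))
    (inj : ∀ φ : A →ₗ[R] E, T ≤ ker φ → K ≤ ker (f φ) → K ≤ ker φ)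
    (surj : ∀ ψ : A →ₗ[R] E, T ≤ ker ψ → ∃ φ, Set.EqOn (f φ) ψ K) : InducesAutOn f K where
  le_ker_iff φ := ⟨fun h => inj φ ((hT.le_ker_iff φ).1 (hTK.trans h)) h, hK φ⟩
  exists_eqOn ψ := by
    obtain ⟨φ, hφ⟩ := hT.exists_eqOn ψ
    obtain ⟨φ', hφ'⟩ := surj (ψ - f φ) (le_ker_sub_iff_eqOn.2 hφ.symm)
    refine ⟨φ + φ', fun z hz => ?_⟩
    rw [map_add, LinearMap.add_apply, hφ' hz, LinearMap.sub_apply, add_sub_cancel]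

theorem iSup_of_directed [Small.{v} R] [Module.Injective R E] {ι : Type*} {K : ι → Submodule R A}
    (hK : Directed (· ≤ ·) K) (h : ∀ i, InducesAutOn f (K i)) : InducesAutOn f (⨆ i, K i) where
  le_ker_iff φ := by simp only [iSup_le_iff, (h _).le_ker_iff]
  exists_eqOn ψ := by
    choose φ hφ using fun i => (h i).exists_eqOn ψ
    obtain ⟨χ, hχ⟩ := exists_eqOn_of_directed hK φ fun i j hij =>
      (h i).eqOn_iff.1 ((hφ i).trans ((hφ j).mono hij).symm)
    exact ⟨χ, le_ker_sub_iff_eqOn.1 <| iSup_le fun i =>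
      le_ker_sub_iff_eqOn.2 (((h i).eqOn_iff.2 (hχ i)).trans (hφ i))⟩

end InducesAutOn

end InducesAutOn

section EssentialSubmodule

open Submodule (torsionBySet)

theorem exists_smul_mem_of_essential {A : Type*} [AddCommGroup A] [Module R A]
    {N : Submodule R A} (hN : ∀ L : Submodule R A, L ≠ ⊥ → L ⊓ N ≠ ⊥) {z : A} (hz : z ≠ 0) :
    ∃ r : R, r • z ∈ N ∧ r • z ≠ 0 := by
  obtain ⟨y, ⟨hy, hyN⟩, hy0⟩ := Submodule.exists_mem_ne_zero_of_ne_bot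
    (hN (R ∙ z) (by rwa [Ne, Submodule.span_singleton_eq_bot]))
  obtain ⟨r, rfl⟩ := Submodule.mem_span_singleton.1 hy
  exact ⟨r, hyN, hy0⟩

variable [IsNoetherianRing R] {A : Type w} [AddCommGroup A] [Module R A] {E : Type v}
  [AddCommGroup E] [Module R E] [Small.{v} R] [Module.Injective R E]
  {f : Module.End R (A →ₗ[R] E)}

/- Multiplication by `x` makes `0 → A[a ⊔ (x)] → A[a] → A[a : x] → 0` exact, and `Hom(-, E)` keeps
it exact. -/
theorem isOka_inducesAutOn_torsionBySet [Small.{w} R] [Module.Injective R A]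
    (f : Module.End R (A →ₗ[R] E)) :
    Ideal.IsOka fun a : Ideal R => InducesAutOn f (torsionBySet R A a) where
  top := by
    rw [Submodule.top_coe, Submodule.torsionBySet_univ]
    exact InducesAutOn.bot
  oka {a x} hsup hcolon := by
    have factor (φ : A →ₗ[R] E) (hφ : torsionBySet R A ↑(a ⊔ Ideal.span {x}) ≤ ker φ) :
        ∃ ψ : A →ₗ[R] E, Set.EqOn φ (x • ψ) (torsionBySet R A a) :=
      exists_eqOn_smul _ x φ fun z hz hxz => hφ (mem_torsionBySet_sup_span_singleton.2 ⟨hz, hxz⟩)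
    refine hsup.of_le (torsionBySet_anti le_sup_left)
      (fun φ => torsionBySet_le_ker_apply (IsNoetherian.noetherian a) f)
      (fun φ hφ hfφ z hz => ?_) fun ψ hψ => ?_
    · obtain ⟨ψ, hψ⟩ := factor φ hφ
      have hfψ : torsionBySet R A ↑(a.colon (Ideal.span {x} : Set R)) ≤ ker (f ψ) := by
        intro z hz
        obtain ⟨w, hw, rfl⟩ := exists_smul_eq_of_mem_torsionBySet_colon hz
        calc f ψ (x • w) = f (x • ψ) w := by rw [map_smul, map_smul, LinearMap.smul_apply]
          _ = f φ w := (torsionBySet_eqOn_apply (IsNoetherian.noetherian a) f hψ hw).symm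
          _ = 0 := hfφ hw
      calc φ z = x • ψ z := hψ hz
        _ = ψ (x • z) := (map_smul ψ x z).symm
        _ = 0 := (hcolon.le_ker_iff ψ).1 hfψ (smul_mem_torsionBySet_colon hz x)
    · obtain ⟨ψ', hψ'⟩ := factor ψ hψ
      obtain ⟨φ, hφ⟩ := hcolon.exists_eqOn ψ'
      refine ⟨x • φ, fun z hz => ?_⟩
      calc f (x • φ) z = f φ (x • z) := by rw [map_smul, map_smul, LinearMap.smul_apply]
        _ = ψ' (x • z) := hφ (smul_mem_torsionBySet_colon hz x)
        _ = x • ψ' z := map_smul ψ' x z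
        _ = ψ z := (hψ' hz).symm

/- On `A[p]` write `φ = r • ψ`, where `r ∉ p` moves a given element into `N`. -/
theorem eqOn_torsionBySet_of_forall_notMem {p : Ideal R} {N : Submodule R A}
    (hN : ∀ L : Submodule R A, L ≠ ⊥ → L ⊓ N ≠ ⊥) (hf : ∀ φ, Set.EqOn (f φ) φ N) {φ : A →ₗ[R] E}
    (hφ : ∀ s ∉ p, torsionBySet R A ↑(p ⊔ Ideal.span {s}) ≤ ker φ) :
    Set.EqOn (f φ) φ (torsionBySet R A p) := by
  intro z hz
  rcases eq_or_ne z 0 with rfl | hz0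
  · rw [map_zero, map_zero]
  obtain ⟨r, hrN, hr0⟩ := exists_smul_mem_of_essential hN hz0
  have hrp : r ∉ p := fun hr => hr0 (mem_torsionBySet_iff_le_torsionOf.1 hz hr)
  obtain ⟨ψ, hψ⟩ := exists_eqOn_smul (torsionBySet R A p) r φ fun y hy hry =>
    hφ r hrp (mem_torsionBySet_sup_span_singleton.2 ⟨hy, hry⟩)
  calc f φ z = f (r • ψ) z := torsionBySet_eqOn_apply (IsNoetherian.noetherian p) f hψ hz
    _ = f ψ (r • z) := by rw [map_smul, map_smul, LinearMap.smul_apply]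
    _ = ψ (r • z) := hf ψ hrN
    _ = r • ψ z := map_smul ψ r z
    _ = φ z := (hψ hz).symm

theorem inducesAutOn_torsionBySet_of_isPrime {p : Ideal R} [p.IsPrime] {N : Submodule R A}
    (hN : ∀ L : Submodule R A, L ≠ ⊥ → L ⊓ N ≠ ⊥) (hf : ∀ φ, Set.EqOn (f φ) φ N)
    (h : ∀ s ∉ p, InducesAutOn f (torsionBySet R A ↑(p ⊔ Ideal.span {s}))) :
    InducesAutOn f (torsionBySet R A p) := by
  let K : p.primeCompl → Submodule R A := fun s => torsionBySet R A ↑(p ⊔ Ideal.span {(s : R)})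
  have hdvd {s t : p.primeCompl} (hst : (s : R) ∣ t) : K s ≤ K t :=
    torsionBySet_anti (sup_le_sup_left (Ideal.span_singleton_le_span_singleton.2 hst) p)
  have hK : Directed (· ≤ ·) K := fun s t =>
    ⟨s * t, hdvd (dvd_mul_right _ _), hdvd (dvd_mul_left _ _)⟩
  have hfix (φ : A →ₗ[R] E) (hφ : ⨆ s, K s ≤ ker φ) : Set.EqOn (f φ) φ (torsionBySet R A p) :=
    eqOn_torsionBySet_of_forall_notMem hN hf fun s hs => iSup_le_iff.1 hφ ⟨s, hs⟩
  exact (InducesAutOn.iSup_of_directed hK fun s => h s s.2).of_le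
    (iSup_le fun _ => torsionBySet_anti le_sup_left)
    (fun φ => torsionBySet_le_ker_apply (IsNoetherian.noetherian p) f)
    (fun φ hφ hfφ z hz => (hfix φ hφ hz).symm.trans (hfφ hz)) fun ψ hψ => ⟨ψ, hfix ψ hψ⟩

theorem bijective_of_forall_eqOn_essential [Small.{w} R] [Module.Injective R A]
    {N : Submodule R A} (hN : ∀ L : Submodule R A, L ≠ ⊥ → L ⊓ N ≠ ⊥)
    (hf : ∀ φ, Set.EqOn (f φ) φ N) : Bijective f := by
  suffices h : ∀ a : Ideal R, InducesAutOn f (torsionBySet R A a) by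
    have htop : torsionBySet R A ((⊥ : Ideal R) : Set R) = ⊤ :=
      eq_top_iff.2 fun _ _ => mem_torsionBySet_iff_le_torsionOf.2 bot_le
    exact (htop ▸ h ⊥).bijective
  by_contra! hne
  obtain ⟨p, hp⟩ := exists_maximal_of_wellFoundedGT _ hne
  have : p.IsPrime := (isOka_inducesAutOn_torsionBySet f).isPrime_of_maximal_not hp
  exact hp.prop <| inducesAutOn_torsionBySet_of_isPrime hN hf fun s hs =>
    not_not.1 <| hp.not_prop_of_gt <| Submodule.lt_sup_iff_notMem.2 hs

end EssentialSubmodule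

section FlatCover

theorem IsFlatCover.of_ker_eq {F M M' : Type u} [AddCommGroup F] [Module R F] [AddCommGroup M]
    [Module R M] [AddCommGroup M'] [Module R M'] {f : F →ₗ[R] M} {g : F →ₗ[R] M'}
    (hf : IsFlatCover R f) (hg : Surjective g) (h : ker f = ker g) : IsFlatCover R g := by
  let w : M' →ₗ[R] M := (ker g).liftQ f h.ge ∘ₗ (g.quotKerEquivOfSurjective hg).symm
  have hwg : w ∘ₗ g = f := by
    ext x
    have hx : (g.quotKerEquivOfSurjective hg).symm (g x) = Submodule.Quotient.mk x :=
      (LinearEquiv.symm_apply_eq _).2 rfl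
    simp only [w, LinearMap.comp_apply, LinearEquiv.coe_coe, hx, Submodule.liftQ_apply]
  have hw : Injective w := by
    refine (injective_iff_map_eq_zero w).2 (hg.forall.2 fun x hx => mem_ker.1 (h.le ?_))
    rwa [mem_ker, ← hwg]
  refine ⟨⟨hf.1.1, fun F' _ _ hF' k => ?_⟩, fun k hk => hf.2 k ?_⟩
  · obtain ⟨l, hl⟩ := hf.1.2 F' hF' (w ∘ₗ k)
    refine ⟨l, (cancel_left hw).1 ?_⟩
    rw [← LinearMap.comp_assoc, hwg, hl]
  · rw [← hwg, LinearMap.comp_assoc, hk]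

theorem ker_lcomp_range_subtype {A B E : Type*} [AddCommGroup A] [Module R A] [AddCommGroup B]
    [Module R B] [AddCommGroup E] [Module R E] (f : B →ₗ[R] A) :
    ker (lcomp R E (range f).subtype) = ker (lcomp R E f) := by
  ext φ
  simp only [mem_ker, lcomp_apply', ← range_le_ker_iff, Submodule.range_subtype]

theorem exists_lcomp_comp_eq {A B F : Type*} [AddCommGroup A] [Module R A] [AddCommGroup B]
    [Module R B] [AddCommGroup F] [Module R F] [Module.Flat R F] {E : Type v} [AddCommGroup E]
    [Module R E] [Small.{v} R] [Module.Injective R E] {i : B →ₗ[R] A} (hi : Injective i)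
    (g : F →ₗ[R] B →ₗ[R] E) : ∃ h : F →ₗ[R] A →ₗ[R] E, lcomp R E i ∘ₗ h = g := by
  obtain ⟨w, hw⟩ := lcomp_surjective_of_injective
    (Module.Flat.lTensor_preserves_injective_linearMap i hi) (TensorProduct.lift g)
  exact ⟨curry w, LinearMap.ext₂ fun x b => LinearMap.congr_fun hw (x ⊗ₜ b)⟩

variable [IsNoetherianRing R] {A B E : Type u} [AddCommGroup A] [Module R A] [AddCommGroup B]
  [Module R B] [AddCommGroup E] [Module R E] {i : B →ₗ[R] A}

theorem IsInjectiveEnvelope.isFlatCover_lcomp [Module.Injective R E]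
    (hi : IsInjectiveEnvelope R i) : IsFlatCover R (lcomp R E i) := by
  obtain ⟨hA, hinj, hess⟩ := hi
  refine ⟨⟨flat_linearMap, fun F _ _ _ => exists_lcomp_comp_eq hinj⟩, fun f hf => ?_⟩
  refine bijective_of_forall_eqOn_essential hess fun φ => ?_
  rintro _ ⟨b, rfl⟩
  exact LinearMap.congr_fun (LinearMap.congr_fun hf φ) b

theorem IsInjectiveCogenerator.isInjectiveEnvelope_of_isFlatCover_lcomp
    (hE : IsInjectiveCogenerator R E) (hi : Injective i) (h : IsFlatCover R (lcomp R E i)) :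
    IsInjectiveEnvelope R i := by
  have := h.1.1
  have := hE.injective_of_flat_linearMap (A := A)
  refine ⟨this, hi, fun N hN hNi => hN ?_⟩
  have hdisj : Injective (N.mkQ ∘ₗ i) := (injective_iff_map_eq_zero _).2 fun b hb =>
    (map_eq_zero_iff i hi).1 <| (Submodule.mem_bot R).1 <|
      hNi ▸ ⟨(Submodule.Quotient.mk_eq_zero N).1 hb, mem_range_self i b⟩
  obtain ⟨w, hw⟩ := lcomp_surjective_of_injective hdisj i
  have he : Injective (w ∘ₗ N.mkQ) := hE.injective_of_lcomp_surjective <| Bijective.surjective <|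
    h.2 _ <| LinearMap.ext₂ fun φ b => congrArg φ (LinearMap.congr_fun hw b)
  rw [← le_bot_iff, ← ker_eq_bot.2 he]
  exact N.ker_mkQ.ge.trans (ker_le_ker_comp _ _)

end FlatCover

section MinimalResolution

variable [IsNoetherianRing R] {M : Type u} [AddCommGroup M] [Module R M] {I : ℕ → Type u}
  [∀ n, AddCommGroup (I n)] [∀ n, Module R (I n)] {ι : M →ₗ[R] I 0}
  {d : ∀ n, I n →ₗ[R] I (n + 1)} {E : Type u} [AddCommGroup E] [Module R E]

theorem IsMinimalInjectiveResolution.isMinimalFlatResolution_lcomp [Module.Injective R E]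
    (h : IsMinimalInjectiveResolution R M I ι d) :
    IsMinimalFlatResolution R (M →ₗ[R] E) (fun n => I n →ₗ[R] E) (lcomp R E ι)
      (fun n => lcomp R E (d n)) := by
  obtain ⟨-, hι, hι₀, hd, envι, envd⟩ := h
  have hsurj : Surjective (lcomp R E ι) := lcomp_surjective_of_injective hι
  exact ⟨hsurj, range_lcomp_eq_ker_lcomp hι₀, fun n => range_lcomp_eq_ker_lcomp (hd n),
    envι.isFlatCover_lcomp.of_ker_eq hsurj (ker_lcomp_range_subtype ι), fun n =>
      (envd n).isFlatCover_lcomp.of_ker_eq (surjective_rangeRestrict _)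
        ((ker_lcomp_range_subtype (d n)).trans (ker_rangeRestrict _).symm)⟩

theorem IsInjectiveCogenerator.isMinimalInjectiveResolution_of_lcomp
    (hE : IsInjectiveCogenerator R E) (hc₀ : d 0 ∘ₗ ι = 0) (hc : ∀ n, d (n + 1) ∘ₗ d n = 0)
    (h : IsMinimalFlatResolution R (M →ₗ[R] E) (fun n => I n →ₗ[R] E) (lcomp R E ι)
      (fun n => lcomp R E (d n))) : IsMinimalInjectiveResolution R M I ι d := by
  obtain ⟨hι, hι₀, hd, covι, covd⟩ := h
  have := hE.1
  have hsurj {n : ℕ} (N : Submodule R (I n)) : Surjective (lcomp R E N.subtype) :=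
    lcomp_surjective_of_injective N.subtype_injective
  have envι : IsInjectiveEnvelope R (range ι).subtype :=
    hE.isInjectiveEnvelope_of_isFlatCover_lcomp (Submodule.subtype_injective _) <|
      covι.of_ker_eq (hsurj _) (ker_lcomp_range_subtype ι).symm
  have envd (n : ℕ) : IsInjectiveEnvelope R (range (d n)).subtype :=
    hE.isInjectiveEnvelope_of_isFlatCover_lcomp (Submodule.subtype_injective _) <|
      (covd n).of_ker_eq (hsurj _) <|
        (ker_rangeRestrict _).trans (ker_lcomp_range_subtype (d n)).symm
  exact ⟨Nat.rec envι.1 fun n _ => (envd n).1, hE.injective_of_lcomp_surjective hι,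
    hE.range_eq_ker_of_lcomp hc₀ hι₀.ge, fun n => hE.range_eq_ker_of_lcomp (hc n) (hd n).ge,
    envι, envd⟩

end MinimalResolution

variable (R)

/-- Over a commutative Noetherian ring, a chain complex `0 → M → I^•`
is a minimal injective resolution iff its dual `Hom_R(I^•, E) → Hom_R(M, E) → 0` is a
minimal flat resolution for some injective cogenerator `E`, iff the dual is a minimal
flat resolution for every injective module `E`. -/
theorem minimalInjectiveResolution_iff_dual_minimalFlatResolution [IsNoetherianRing R]
    {M : Type u} [AddCommGroup M] [Module R M]
    (I : ℕ → Type u) [∀ n, AddCommGroup (I n)] [∀ n, Module R (I n)]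
    (ι : M →ₗ[R] I 0) (d : ∀ n, I n →ₗ[R] I (n + 1))
    (hc₀ : d 0 ∘ₗ ι = 0) (hc : ∀ n, d (n + 1) ∘ₗ d n = 0) :
    (IsMinimalInjectiveResolution R M I ι d ↔
      ∃ (E : Type u) (_ : AddCommGroup E) (_ : Module R E),
        IsInjectiveCogenerator R E ∧
          IsMinimalFlatResolution R (M →ₗ[R] E) (fun n => I n →ₗ[R] E)
            (LinearMap.lcomp R E ι) (fun n => LinearMap.lcomp R E (d n))) ∧
    (IsMinimalInjectiveResolution R M I ι d ↔
      ∀ (E : Type u) [AddCommGroup E] [Module R E], Module.Injective R E →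
        IsMinimalFlatResolution R (M →ₗ[R] E) (fun n => I n →ₗ[R] E)
          (LinearMap.lcomp R E ι) (fun n => LinearMap.lcomp R E (d n))) := by
  have hcog := isInjectiveCogenerator_characterModule (R := R)
  have dual (h : IsMinimalInjectiveResolution R M I ι d) (E : Type u) [AddCommGroup E]
      [Module R E] (_ : Module.Injective R E) := h.isMinimalFlatResolution_lcomp (E := E)
  refine ⟨⟨fun h => ⟨_, _, _, hcog, dual h _ hcog.1⟩, ?_⟩, dual, fun h =>
    hcog.isMinimalInjectiveResolution_of_lcomp hc₀ hc (h _ hcog.1)⟩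
  rintro ⟨E, _, _, hE, h⟩
  exact hE.isMinimalInjectiveResolution_of_lcomp hc₀ hc h
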